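/- (Cohomological obstruction) Let ε : Ω^0 → ℝ be any linear map (for the de Rham complex of a manifold, evaluation at a point). Define c : 𝔤^{n+1} → ℝ by c(x_1,…,x_{n+1}) := ε(ι(v_{x_1}∧⋯∧v_{x_{n+1}})ω). Then c is an alternating multilinear map with d_𝔤 c = 0; and if there exists a homotopy moment map (f_1,…,f_n) for ω, then c is a Chevalley–Eilenberg coboundary: the alternating map ψ := (−1)^n·ς(n)·(ε∘f_n) : 𝔤^n → ℝ satisfies d_𝔤 ψ = c. -/

import Mathlib

/-- Cartan calculus data over ℝ: a module `carrier` with graded pieces `deg i`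
(`deg i = ⊥` for `i < 0`), a degree-`+1` differential `d` squaring to zero,
a real Lie algebra `X`, contractions `ι v` of degree `-1` depending linearly on `v`,
pairwise anticommuting, and satisfying the Cartan relation
`𝓛_v ∘ ι_w - ι_w ∘ 𝓛_v = ι_[v,w]` where `𝓛_v = d ∘ ι_v + ι_v ∘ d`. -/
structure CartanCalculus where
  carrier : Type
  [addCommGroup : AddCommGroup carrier]
  [module : Module ℝ carrier]
  deg : ℤ → Submodule ℝ carrier
  deg_neg : ∀ i : ℤ, i < 0 → deg i = ⊥
  d : carrier →ₗ[ℝ] carrier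
  d_deg : ∀ i : ℤ, ∀ a ∈ deg i, d a ∈ deg (i + 1)
  d_d : ∀ a : carrier, d (d a) = 0
  X : Type
  [lieRingX : LieRing X]
  [lieAlgebraX : LieAlgebra ℝ X]
  ι : X →ₗ[ℝ] carrier →ₗ[ℝ] carrier
  ι_deg : ∀ (v : X) (i : ℤ), ∀ a ∈ deg i, ι v a ∈ deg (i - 1)
  ι_ι : ∀ (v w : X) (a : carrier), ι v (ι w a) = - ι w (ι v a)
  cartan : ∀ (v w : X) (a : carrier),
      (d (ι v (ι w a)) + ι v (d (ι w a))) - ι w (d (ι v a) + ι v (d a)) = ι ⁅v, w⁆ a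

attribute [instance] CartanCalculus.addCommGroup CartanCalculus.module
  CartanCalculus.lieRingX CartanCalculus.lieAlgebraX

namespace CartanCalculus

/-- The Lie derivative `𝓛_v = d ∘ ι_v + ι_v ∘ d`. -/
def L (C : CartanCalculus) (v : C.X) : C.carrier →ₗ[ℝ] C.carrier :=
  C.d ∘ₗ C.ι v + C.ι v ∘ₗ C.d

/-- Iterated contraction: `iotaL [v₁, …, v_k] = ι_{v_k} ∘ ⋯ ∘ ι_{v₁}`, i.e. the
contraction `ι(v₁ ∧ ⋯ ∧ v_k)` (`ι_{v₁}` acts first). -/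
def iotaL (C : CartanCalculus) : List C.X → C.carrier →ₗ[ℝ] C.carrier
  | [] => LinearMap.id
  | v :: vs => (C.iotaL vs).comp (C.ι v)

end CartanCalculus

/-- Interpret a list as a `Fin k`-tuple (junk value `0` out of range). -/
def listToFun {α : Type} [Zero α] (k : ℕ) (l : List α) : Fin k → α :=
  fun m => l.getD m.val 0

/-- A map `𝔤^k → W` is multilinear. -/
def IsMultilinear {𝔤 : Type} [AddCommGroup 𝔤] [Module ℝ 𝔤] {W : Type}
    [AddCommGroup W] [Module ℝ W] {k : ℕ} (ψ : (Fin k → 𝔤) → W) : Prop :=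
  ∀ (x : Fin k → 𝔤) (i : Fin k),
    (∀ a b : 𝔤, ψ (Function.update x i (a + b))
        = ψ (Function.update x i a) + ψ (Function.update x i b)) ∧
    (∀ (c : ℝ) (a : 𝔤), ψ (Function.update x i (c • a)) = c • ψ (Function.update x i a))

/-- A map `𝔤^k → W` is alternating. -/
def IsAlternating {𝔤 : Type} {W : Type} [AddCommGroup W] {k : ℕ}
    (ψ : (Fin k → 𝔤) → W) : Prop :=
  ∀ (x : Fin k → 𝔤) (i j : Fin k), i ≠ j → x i = x j → ψ x = 0

/-- The Chevalley–Eilenberg differential of a `k`-cochain `ψ`: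
`(d_𝔤 ψ)(x₁,…,x_{k+1}) = Σ_{i<j} (-1)^{i+j} ψ([x_i,x_j], x₁, …, x̂_i, …, x̂_j, …, x_{k+1})`
(signs written for 1-based indices, as in the paper). -/
def dCE {𝔤 : Type} [LieRing 𝔤] [LieAlgebra ℝ 𝔤] {W : Type} [AddCommGroup W]
    [Module ℝ W] (k : ℕ) (ψ : (Fin k → 𝔤) → W) : (Fin (k + 1) → 𝔤) → W :=
  fun x => ∑ i : Fin (k + 1), ∑ j : Fin (k + 1),
    if (i : ℕ) < (j : ℕ) then
      ((-1 : ℝ) ^ ((i : ℕ) + (j : ℕ))) •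
        ψ (listToFun k (⁅x i, x j⁆ :: (((List.ofFn x).eraseIdx (j : ℕ)).eraseIdx (i : ℕ))))
    else 0

namespace CartanCalculus

/-- `σ_k(x₁,…,x_k) = ι(v_{x₁} ∧ ⋯ ∧ v_{x_k}) σ` where `v_x = ρ x`. -/
def lower (C : CartanCalculus) {𝔤 : Type} [LieRing 𝔤] [LieAlgebra ℝ 𝔤]
    (ρ : 𝔤 →ₗ⁅ℝ⁆ C.X) (k : ℕ) (σ : C.carrier) : (Fin k → 𝔤) → C.carrier :=
  fun x => C.iotaL (List.ofFn (fun i => ρ (x i))) σ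

/-- `F_k(x₁,…,x_k) = ι(v_{x₁} ∧ ⋯ ∧ v_{x_{k-1}}) (F x_k)`, with `F₀ := 0`. -/
def lowerF (C : CartanCalculus) {𝔤 : Type} [LieRing 𝔤] [LieAlgebra ℝ 𝔤]
    (ρ : 𝔤 →ₗ⁅ℝ⁆ C.X) (F : 𝔤 → C.carrier) : (k : ℕ) → (Fin k → 𝔤) → C.carrier
  | 0 => fun _ => 0
  | (k + 1) => fun x =>
      C.iotaL (List.ofFn (fun i : Fin k => ρ (x i.castSucc))) (F (x (Fin.last k)))

end CartanCalculus

/-- `ς(k) = -(-1)^{k(k+1)/2}`. -/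
def varsigma (k : ℕ) : ℝ := -((-1 : ℝ) ^ (k * (k + 1) / 2))

/-- A homotopy moment map for the invariant closed form `ω ∈ Ω^{n+1}`
(componentwise form of Def. 5.1 in [FRZ]): a family of alternating multilinear maps
`f_k : 𝔤^k → Ω^{n-k}` (`k = 1, …, n`) satisfying the moment map equations. -/
def IsMomentMap (C : CartanCalculus) {𝔤 : Type} [LieRing 𝔤] [LieAlgebra ℝ 𝔤]
    (ρ : 𝔤 →ₗ⁅ℝ⁆ C.X) (n : ℕ) (ω : C.carrier)
    (f : (k : ℕ) → (Fin k → 𝔤) → C.carrier) : Prop :=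
  (∀ k : ℕ, 1 ≤ k → k ≤ n →
      IsMultilinear (f k) ∧ IsAlternating (f k) ∧ ∀ x, f k x ∈ C.deg ((n : ℤ) - (k : ℤ))) ∧
  (∀ x : 𝔤, C.d (f 1 (fun _ => x)) = - C.ι (ρ x) ω) ∧
  (∀ k : ℕ, 2 ≤ k → k ≤ n → ∀ x : Fin k → 𝔤,
      (∑ i : Fin k, ∑ j : Fin k,
        if (i : ℕ) < (j : ℕ) then
          ((-1 : ℝ) ^ ((i : ℕ) + (j : ℕ) + 1)) •
            f (k - 1) (listToFun (k - 1)
              (⁅x i, x j⁆ :: (((List.ofFn x).eraseIdx (j : ℕ)).eraseIdx (i : ℕ))))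
        else 0)
      = C.d (f k x) + varsigma k • C.lower ρ k ω x) ∧
  (∀ x : Fin (n + 1) → 𝔤,
      (∑ i : Fin (n + 1), ∑ j : Fin (n + 1),
        if (i : ℕ) < (j : ℕ) then
          ((-1 : ℝ) ^ ((i : ℕ) + (j : ℕ) + 1)) •
            f n (listToFun n
              (⁅x i, x j⁆ :: (((List.ofFn x).eraseIdx (j : ℕ)).eraseIdx (i : ℕ))))
        else 0)
      = varsigma (n + 1) • C.lower ρ (n + 1) ω x)

/-- Iterated contraction lowers the degree by the number of vectors. -/
lemma CartanCalculus.iotaL_deg (C : CartanCalculus) (l : List C.X) (i : ℤ)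
    (a : C.carrier) (ha : a ∈ C.deg i) :
    C.iotaL l a ∈ C.deg (i - (l.length : ℤ)) := by
  induction l generalizing i a with
  | nil => simpa [CartanCalculus.iotaL] using ha
  | cons v vs ih =>
      have h1 : C.ι v a ∈ C.deg (i - 1) := C.ι_deg v i a ha
      have h2 := ih (i - 1) (C.ι v a) h1
      have heq : i - 1 - (vs.length : ℤ) = i - ((v :: vs).length : ℤ) := by
        simp only [List.length_cons]
        push_cast
        ring
      have h3 : C.iotaL (v :: vs) a = C.iotaL vs (C.ι v a) := rfl
      rw [h3, ← heq]
      exact h2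

/-- The full contraction of `ω ∈ Ω^{n+1}` by `n+1` vectors lands in `Ω^0`. -/
lemma CartanCalculus.lower_mem_deg_zero (C : CartanCalculus) {𝔤 : Type} [LieRing 𝔤]
    [LieAlgebra ℝ 𝔤] (ρ : 𝔤 →ₗ⁅ℝ⁆ C.X) (n : ℕ) (ω : C.carrier)
    (hω : ω ∈ C.deg ((n : ℤ) + 1)) (x : Fin (n + 1) → 𝔤) :
    C.lower ρ (n + 1) ω x ∈ C.deg 0 := by
  have h := C.iotaL_deg (List.ofFn (fun i => ρ (x i))) ((n : ℤ) + 1) ω hω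
  have heq : (n : ℤ) + 1 - ((List.ofFn (fun i : Fin (n + 1) => ρ (x i))).length : ℤ)
      = 0 := by
    simp
  show C.iotaL (List.ofFn (fun i => ρ (x i))) ω ∈ C.deg 0
  rw [← heq]
  exact h

/-- The cochain `c : 𝔤^{n+1} → ℝ`, `c(x₁,…,x_{n+1}) = ε(ι(v_{x₁}∧⋯∧v_{x_{n+1}})ω)`,
i.e. `(-1)^n ω_{n+1}` evaluated by `ε : Ω^0 → ℝ` (without the sign). -/
def obstructionCocycle (C : CartanCalculus) {𝔤 : Type} [LieRing 𝔤] [LieAlgebra ℝ 𝔤]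
    (ρ : 𝔤 →ₗ⁅ℝ⁆ C.X) (n : ℕ) (ω : C.carrier) (hω : ω ∈ C.deg ((n : ℤ) + 1))
    (ε : C.deg 0 →ₗ[ℝ] ℝ) : (Fin (n + 1) → 𝔤) → ℝ :=
  fun x => ε ⟨C.lower ρ (n + 1) ω x, C.lower_mem_deg_zero ρ n ω hω x⟩

namespace CartanCalculus

lemma iotaL_cons (C : CartanCalculus) (v : C.X) (l : List C.X) (a : C.carrier) :
    C.iotaL (v :: l) a = C.iotaL l (C.ι v a) := rfl

lemma iotaL_append_single (C : CartanCalculus) (v : C.X) (l : List C.X) (a : C.carrier) :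
    C.iotaL (l ++ [v]) a = C.ι v (C.iotaL l a) := by
  induction l generalizing a with
  | nil => rfl
  | cons u l ih => exact ih _

lemma iotaL_swap (C : CartanCalculus) (u v : C.X) (l : List C.X) (a : C.carrier) :
    C.iotaL (u :: v :: l) a = - C.iotaL (v :: u :: l) a := by
  simp only [iotaL_cons]
  rw [C.ι_ι v u a, map_neg]

lemma ι_self (C : CartanCalculus) (v : C.X) (a : C.carrier) : C.ι v (C.ι v a) = 0 := by
  have h := C.ι_ι v v a
  have h2 : (2 : ℝ) • C.ι v (C.ι v a) = 0 := by
    rw [two_smul]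
    nth_rewrite 1 [h]
    simp
  simpa using h2

lemma iotaL_mem (C : CartanCalculus) (v : C.X) (l : List C.X) (hv : v ∈ l) (a : C.carrier) :
    C.iotaL (v :: l) a = 0 := by
  induction l generalizing a with
  | nil => simp at hv
  | cons u l ih =>
    rcases List.mem_cons.1 hv with h | h
    · subst h
      simp [iotaL_cons, ι_self]
    · rw [iotaL_swap, iotaL_cons, ih h, neg_zero]

lemma iotaL_not_nodup (C : CartanCalculus) (l : List C.X) (hl : ¬ l.Nodup) (a : C.carrier) :
    C.iotaL l a = 0 := by
  induction l generalizing a with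
  | nil => simp at hl
  | cons u l ih =>
    by_cases h : u ∈ l
    · exact C.iotaL_mem u l h a
    · rw [iotaL_cons]
      exact ih (fun h2 => hl (List.nodup_cons.2 ⟨h, h2⟩)) _

lemma iotaL_set_add (C : CartanCalculus) (l : List C.X) (i : ℕ) (hi : i < l.length)
    (u v : C.X) (a : C.carrier) :
    C.iotaL (l.set i (u + v)) a = C.iotaL (l.set i u) a + C.iotaL (l.set i v) a := by
  induction l generalizing a i with
  | nil => simp at hi
  | cons w l ih =>
    cases i with
    | zero => simp [iotaL_cons]
    | succ i =>
      simp only [List.set_cons_succ, iotaL_cons]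
      exact ih i (by simpa using hi) _

lemma iotaL_set_smul (C : CartanCalculus) (l : List C.X) (i : ℕ) (hi : i < l.length)
    (c : ℝ) (v : C.X) (a : C.carrier) :
    C.iotaL (l.set i (c • v)) a = c • C.iotaL (l.set i v) a := by
  induction l generalizing a i with
  | nil => simp at hi
  | cons w l ih =>
    cases i with
    | zero => simp [iotaL_cons]
    | succ i =>
      simp only [List.set_cons_succ, iotaL_cons]
      exact ih i (by simpa using hi) _

lemma L_ι (C : CartanCalculus) (v w : C.X) (a : C.carrier) :
    C.L v (C.ι w a) = C.ι w (C.L v a) + C.ι ⁅v, w⁆ a := by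
  rw [← C.cartan v w a]
  simp [L]

lemma L_iotaL (C : CartanCalculus) (v : C.X) (l : List C.X) (a : C.carrier) :
    C.L v (C.iotaL l a) = C.iotaL l (C.L v a) +
      ∑ i ∈ Finset.range l.length,
        (-1 : ℝ) ^ i • C.iotaL (⁅v, l.getD i 0⁆ :: l.eraseIdx i) a := by
  induction l generalizing a with
  | nil => simp [iotaL]
  | cons u l ih =>
    rw [iotaL_cons, ih, L_ι, List.length_cons, Finset.sum_range_succ']
    have : ∀ i ∈ Finset.range l.length,
        (-1 : ℝ) ^ (i + 1) • C.iotaL (⁅v, (u :: l).getD (i + 1) 0⁆ :: (u :: l).eraseIdx (i + 1)) a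
        = (-1 : ℝ) ^ i • C.iotaL (⁅v, l.getD i 0⁆ :: l.eraseIdx i) (C.ι u a) := by
      intro i _
      rw [List.eraseIdx_cons_succ, iotaL_swap, iotaL_cons, pow_succ]
      simp
    rw [Finset.sum_congr rfl this]
    simp [iotaL_cons]
    abel

/-- The Chevalley–Eilenberg type sum over a list. -/
def bigS (C : CartanCalculus) (l : List C.X) (a : C.carrier) : C.carrier :=
  ∑ i ∈ Finset.range l.length, ∑ j ∈ Finset.range l.length,
    if i < j then (-1 : ℝ) ^ (i + j) •
      C.iotaL (⁅l.getD i 0, l.getD j 0⁆ :: (l.eraseIdx j).eraseIdx i) a else 0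

lemma bigS_append (C : CartanCalculus) (l : List C.X) (v : C.X) (a : C.carrier) :
    C.bigS (l ++ [v]) a = C.ι v (C.bigS l a) -
      (-1 : ℝ) ^ l.length • ∑ i ∈ Finset.range l.length,
        (-1 : ℝ) ^ i • C.iotaL (⁅v, l.getD i 0⁆ :: l.eraseIdx i) a := by
  unfold bigS
  rw [List.length_append, List.length_singleton, Finset.sum_range_succ]
  have h0 : (∑ j ∈ Finset.range (l.length + 1),
    if l.length < j then (-1 : ℝ) ^ (l.length + j) •
      C.iotaL (⁅(l ++ [v]).getD l.length 0, (l ++ [v]).getD j 0⁆ ::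
        ((l ++ [v]).eraseIdx j).eraseIdx l.length) a else 0) = 0 := by
    apply Finset.sum_eq_zero
    intro j hj
    rw [if_neg]
    have := Finset.mem_range.1 hj
    omega
  rw [h0, add_zero, map_sum, Finset.smul_sum, ← Finset.sum_sub_distrib]
  apply Finset.sum_congr rfl
  intro i hi
  have hi' := Finset.mem_range.1 hi
  rw [Finset.sum_range_succ, map_sum, sub_eq_add_neg]
  congr 1
  · apply Finset.sum_congr rfl
    intro j hj
    have hj' := Finset.mem_range.1 hj
    split_ifs with hij
    · rw [List.eraseIdx_append_of_lt_length hj',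
        List.eraseIdx_append_of_lt_length (by rw [List.length_eraseIdx]; split_ifs <;> omega),
        List.getD_append _ _ _ _ hi', List.getD_append _ _ _ _ hj', map_smul,
        ← iotaL_append_single]
      rfl
    · simp
  · rw [if_pos hi', List.getD_append _ _ _ _ hi', List.eraseIdx_append_of_length_le le_rfl]
    have hsk : ⁅l.getD i 0, v⁆ = -⁅v, l.getD i 0⁆ := (lie_skew _ _).symm
    have hv : (l ++ [v]).getD l.length 0 = v := by simp
    rw [hv, hsk]
    generalize ⁅v, l.getD i 0⁆ = w
    simp [iotaL_cons, smul_smul, pow_add, mul_comm]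

lemma bigS_eq (C : CartanCalculus) (l : List C.X) (a : C.carrier) (ha : C.d a = 0)
    (hl : ∀ v ∈ l, C.L v a = 0) :
    C.bigS l a = (-1 : ℝ) ^ l.length • C.d (C.iotaL l a) := by
  induction l using List.reverseRecOn with
  | nil => simp [bigS, iotaL, ha]
  | append_singleton l v ih =>
    have h1 := C.L_iotaL v l a
    rw [hl v (by simp), map_zero, zero_add] at h1
    rw [bigS_append, ← h1, ih (fun w hw => hl w (by simp [hw])), iotaL_append_single]
    simp [L, pow_succ]

end CartanCalculus

lemma ofFn_listToFun {α : Type} [Zero α] (k : ℕ) (l : List α) (h : l.length = k) :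
    List.ofFn (listToFun k l) = l := by
  subst h
  apply List.ext_getElem
  · simp
  · intro i h1 h2
    simp [listToFun, h2]

lemma map_eraseIdx_aux {α β : Type} (f : α → β) (l : List α) (i : ℕ) :
    (l.eraseIdx i).map f = (l.map f).eraseIdx i := by
  induction l generalizing i with
  | nil => simp
  | cons a l ih => cases i <;> simp [ih]

lemma lower_eq_map (C : CartanCalculus) {𝔤 : Type} [LieRing 𝔤] [LieAlgebra ℝ 𝔤]
    (ρ : 𝔤 →ₗ⁅ℝ⁆ C.X) (k : ℕ) (σ : C.carrier) (x : Fin k → 𝔤) :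
    C.lower ρ k σ x = C.iotaL ((List.ofFn x).map ρ) σ := by
  rw [List.map_ofFn]; rfl

lemma lower_update (C : CartanCalculus) {𝔤 : Type} [LieRing 𝔤] [LieAlgebra ℝ 𝔤]
    (ρ : 𝔤 →ₗ⁅ℝ⁆ C.X) (k : ℕ) (σ : C.carrier) (x : Fin k → 𝔤) (i : Fin k) (a : 𝔤) :
    C.lower ρ k σ (Function.update x i a)
      = C.iotaL (((List.ofFn x).map ρ).set i (ρ a)) σ := by
  rw [lower_eq_map]
  congr 2
  apply List.ext_getElem
  · simp
  · intro m h1 h2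
    have hm : m < k := by simpa using h1
    by_cases h : i.val = m
    · subst h
      simp
    · have h' : (⟨m, hm⟩ : Fin k) ≠ i := fun e => h (by rw [← e])
      simp [List.getElem_set, h, Function.update_of_ne h']

lemma dCE_lower (C : CartanCalculus) {𝔤 : Type} [LieRing 𝔤] [LieAlgebra ℝ 𝔤]
    (ρ : 𝔤 →ₗ⁅ℝ⁆ C.X) (k : ℕ) (σ : C.carrier) (x : Fin (k + 2) → 𝔤) :
    dCE (k + 1) (C.lower ρ (k + 1) σ) x = C.bigS ((List.ofFn x).map ρ) σ := by
  unfold dCE CartanCalculus.bigS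
  have hlen : ((List.ofFn x).map ρ).length = k + 2 := by simp
  rw [hlen, Finset.sum_range]
  apply Finset.sum_congr rfl
  intro i _
  rw [Finset.sum_range]
  apply Finset.sum_congr rfl
  intro j _
  split_ifs with hij
  · have hi : ((List.ofFn x).map ρ).getD i.val 0 = ρ (x i) := by
      rw [List.getD_eq_getElem _ _ (by rw [hlen]; exact i.isLt), List.getElem_map,
        List.getElem_ofFn]
    have hj : ((List.ofFn x).map ρ).getD j.val 0 = ρ (x j) := by
      rw [List.getD_eq_getElem _ _ (by rw [hlen]; exact j.isLt), List.getElem_map,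
        List.getElem_ofFn]
    have hlt := j.isLt
    rw [lower_eq_map, ofFn_listToFun, hi, hj, List.map_cons, map_eraseIdx_aux, map_eraseIdx_aux,
      LieHom.map_lie]
    simp only [List.length_cons, List.length_eraseIdx, List.length_ofFn]
    split_ifs <;> omega
  · rfl

lemma dCE_comp {𝔤 : Type} [LieRing 𝔤] [LieAlgebra ℝ 𝔤] {W V : Type} [AddCommGroup W]
    [Module ℝ W] [AddCommGroup V] [Module ℝ V] (g : W →ₗ[ℝ] V) (k : ℕ) (ψ : (Fin k → 𝔤) → W)
    (x : Fin (k + 1) → 𝔤) :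
    dCE k (fun y => g (ψ y)) x = g (dCE k ψ x) := by
  unfold dCE
  simp only [map_sum]
  refine Finset.sum_congr rfl fun i _ => Finset.sum_congr rfl fun j _ => ?_
  split_ifs <;> simp

lemma varsigma_mul (n : ℕ) : (-1 : ℝ) ^ n * varsigma n * varsigma (n + 1) = -1 := by
  unfold varsigma
  have h : (n + 1) * (n + 1 + 1) / 2 = n * (n + 1) / 2 + (n + 1) := by
    have : (n + 1) * (n + 1 + 1) = n * (n + 1) + (n + 1) * 2 := by ring
    rw [this, Nat.add_mul_div_right _ _ (by norm_num)]
  rw [h]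
  generalize n * (n + 1) / 2 = m
  have h1 : ((-1 : ℝ) ^ n) * (-1) ^ n = 1 := by rw [← mul_pow]; simp
  have h2 : ((-1 : ℝ) ^ m) * (-1) ^ m = 1 := by rw [← mul_pow]; simp
  rw [pow_add, pow_succ]
  linear_combination (-1) * (-1 : ℝ) ^ m * (-1) ^ m * h1 - h2

/-- cohomological obstruction, §5 of the paper. For any linear
`ε : Ω^0 → ℝ`, the cochain `c(x₁,…,x_{n+1}) = ε(ι(v_{x₁}∧⋯∧v_{x_{n+1}})ω)` is
alternating multilinear with `d_𝔤 c = 0`, and if a homotopy moment map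
`(f₁,…,f_n)` for `ω` exists then `c = d_𝔤 ψ` for
`ψ := (-1)^n ς(n)·(ε ∘ f_n)`. -/
theorem obstruction_cocycle_is_coboundary (C : CartanCalculus) {𝔤 : Type}
    [LieRing 𝔤] [LieAlgebra ℝ 𝔤] (ρ : 𝔤 →ₗ⁅ℝ⁆ C.X) (n : ℕ) (hn : 1 ≤ n)
    (ω : C.carrier) (hω : ω ∈ C.deg ((n : ℤ) + 1)) (hcl : C.d ω = 0)
    (hinv : ∀ x : 𝔤, C.L (ρ x) ω = 0) (ε : C.deg 0 →ₗ[ℝ] ℝ) :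
    (IsMultilinear (obstructionCocycle C ρ n ω hω ε) ∧
     IsAlternating (obstructionCocycle C ρ n ω hω ε) ∧
     (∀ x : Fin (n + 2) → 𝔤, dCE (n + 1) (obstructionCocycle C ρ n ω hω ε) x = 0)) ∧
    (∀ f : (k : ℕ) → (Fin k → 𝔤) → C.carrier, ∀ hf : IsMomentMap C ρ n ω f,
      IsAlternating (fun y : Fin n → 𝔤 =>
        ((-1 : ℝ) ^ n * varsigma n) *
          ε ⟨f n y, by simpa using (hf.1 n hn le_rfl).2.2 y⟩) ∧
      ∀ x : Fin (n + 1) → 𝔤,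
        dCE n (fun y : Fin n → 𝔤 =>
          ((-1 : ℝ) ^ n * varsigma n) *
            ε ⟨f n y, by simpa using (hf.1 n hn le_rfl).2.2 y⟩) x
        = obstructionCocycle C ρ n ω hω ε x) := by
  have hsub : ∀ (k : ℕ) (g : (Fin k → 𝔤) → C.deg 0) (y : Fin (k + 1) → 𝔤),
      ((dCE k g y : C.deg 0) : C.carrier) = dCE k (fun z => (g z : C.carrier)) y :=
    fun k g y => (dCE_comp (C.deg 0).subtype k g y).symm
  refine ⟨⟨?_, ?_, ?_⟩, ?_⟩
  · intro x i
    have hi : i.val < ((List.ofFn x).map ρ).length := by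
      rw [List.length_map, List.length_ofFn]; exact i.isLt
    constructor
    · intro a b
      unfold obstructionCocycle
      rw [← map_add]
      congr 1
      apply Subtype.ext
      simp only [lower_update, Submodule.coe_add, map_add]
      exact C.iotaL_set_add _ _ hi _ _ _
    · intro c a
      unfold obstructionCocycle
      rw [← map_smul]
      congr 1
      apply Subtype.ext
      simp only [lower_update, Submodule.coe_smul, map_smul]
      exact C.iotaL_set_smul _ _ hi _ _ _
  · intro x i j hij hx
    unfold obstructionCocycle
    have h : C.lower ρ (n + 1) ω x = 0 := by
      apply C.iotaL_not_nodup
      rw [List.nodup_ofFn]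
      intro hinj
      exact hij (hinj (by simp [hx]))
    have h2 : (⟨C.lower ρ (n + 1) ω x, C.lower_mem_deg_zero ρ n ω hω x⟩ : C.deg 0) = 0 :=
      Subtype.ext h
    rw [h2, map_zero]
  · intro x
    have h1 := dCE_comp ε (n + 1) (fun y : Fin (n + 1) → 𝔤 =>
      (⟨C.lower ρ (n + 1) ω y, C.lower_mem_deg_zero ρ n ω hω y⟩ : C.deg 0)) x
    refine h1.trans ?_
    suffices h : dCE (n + 1) (fun y : Fin (n + 1) → 𝔤 =>
      (⟨C.lower ρ (n + 1) ω y, C.lower_mem_deg_zero ρ n ω hω y⟩ : C.deg 0)) x = 0 by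
      rw [h, map_zero]
    apply Subtype.ext
    rw [hsub]
    refine (dCE_lower C ρ n ω x).trans ?_
    rw [C.bigS_eq _ _ hcl]
    · have h0 := C.iotaL_deg ((List.ofFn x).map ρ) _ ω hω
      rw [C.deg_neg _ (by simp), Submodule.mem_bot] at h0
      rw [h0]
      simp
    · intro v hv
      obtain ⟨y, _, rfl⟩ := List.mem_map.1 hv
      exact hinv y
  · intro f hf
    have hmem : ∀ y, f n y ∈ C.deg 0 := fun y => by simpa using (hf.1 n hn le_rfl).2.2 y
    constructor
    · intro x i j hij hx
      have h := (hf.1 n hn le_rfl).2.1 x i j hij hx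
      have h2 : (⟨f n x, hmem x⟩ : C.deg 0) = 0 := Subtype.ext h
      show ((-1 : ℝ) ^ n * varsigma n) * ε ⟨f n x, hmem x⟩ = 0
      rw [h2, map_zero, mul_zero]
    · intro x
      have h1 := dCE_comp (((-1 : ℝ) ^ n * varsigma n) • ε) n
        (fun y : Fin n → 𝔤 => (⟨f n y, hmem y⟩ : C.deg 0)) x
      refine h1.trans ?_
      have h2 : dCE n (fun y : Fin n → 𝔤 => (⟨f n y, hmem y⟩ : C.deg 0)) x
          = (-varsigma (n + 1)) •
            (⟨C.lower ρ (n + 1) ω x, C.lower_mem_deg_zero ρ n ω hω x⟩ : C.deg 0) := by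
        apply Subtype.ext
        rw [hsub, Submodule.coe_smul, neg_smul]
        show dCE n (fun z => f n z) x = - (varsigma (n + 1) • C.lower ρ (n + 1) ω x)
        rw [← hf.2.2.2 x]
        unfold dCE
        simp only [← Finset.sum_neg_distrib]
        refine Finset.sum_congr rfl fun i _ => Finset.sum_congr rfl fun j _ => ?_
        split_ifs
        · simp [pow_succ]
        · simp
      rw [h2, map_smul]
      simp only [LinearMap.smul_apply, smul_eq_mul]
      unfold obstructionCocycle
      linear_combination (-1) * ε ⟨C.lower ρ (n + 1) ω x, C.lower_mem_deg_zero ρ n ω hω x⟩ *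
        varsigma_mul n
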